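/- Let ω : [0,1) → (0,∞) be a continuous function satisfying lim_{s→0⁺} s^α · log(ω(e^{−s})) = 0 for every α > 0. Fix s₀ < 0 and β ∈ (0,1), and for m > 0 set s₁(m) = s₀/m^β and s₂(m) = 2·s₀/m^β. Then lim_{m→∞} (1/m^{1−β}) · [ ((s₂(m)−s₀)/(s₁(m)−s₀)) · log(ω(e^{s₁(m)})) − (1 − (s₂(m)−s₀)/(s₁(m)−s₀)) · m ] = −1. In particular, for every c ∈ (0,1) there exists m₀ > 0 such that for all m > m₀: ((s₂(m)−s₀)/(s₁(m)−s₀)) · log(ω(e^{s₁(m)})) − (1 − (s₂(m)−s₀)/(s₁(m)−s₀)) · m ≤ −c·m^{1−β}. -/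

import Mathlib

open Real Filter

theorem affine_bound_limit
    (ω : ℝ → ℝ) (hωcont : ContinuousOn ω (Set.Ico 0 1))
    (hωpos : ∀ r ∈ Set.Ico (0:ℝ) 1, 0 < ω r)
    (hωcond : ∀ α > (0:ℝ),
      Tendsto (fun s : ℝ => s ^ α * Real.log (ω (Real.exp (-s))))
        (nhdsWithin 0 (Set.Ioi 0)) (nhds 0))
    (s₀ β : ℝ) (hs₀ : s₀ < 0) (hβ : β ∈ Set.Ioo (0:ℝ) 1) :
    (Tendsto
        (fun m : ℝ =>
          (1 / m ^ (1 - β)) *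
            (((2 * s₀ / m ^ β - s₀) / (s₀ / m ^ β - s₀)) * Real.log (ω (Real.exp (s₀ / m ^ β)))
              - (1 - (2 * s₀ / m ^ β - s₀) / (s₀ / m ^ β - s₀)) * m))
        atTop (nhds (-1)))
    ∧ ∀ c ∈ Set.Ioo (0:ℝ) 1, ∃ m₀ > (0:ℝ), ∀ m > m₀,
        ((2 * s₀ / m ^ β - s₀) / (s₀ / m ^ β - s₀)) * Real.log (ω (Real.exp (s₀ / m ^ β)))
            - (1 - (2 * s₀ / m ^ β - s₀) / (s₀ / m ^ β - s₀)) * m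
          ≤ -(c * m ^ (1 - β)) := by
  obtain ⟨hβ0, hβ1⟩ := hβ
  have key : Tendsto
        (fun m : ℝ =>
          (1 / m ^ (1 - β)) *
            (((2 * s₀ / m ^ β - s₀) / (s₀ / m ^ β - s₀)) * Real.log (ω (Real.exp (s₀ / m ^ β)))
              - (1 - (2 * s₀ / m ^ β - s₀) / (s₀ / m ^ β - s₀)) * m))
        atTop (nhds (-1)) := by
    have hx : Tendsto (fun m : ℝ => (m ^ β)⁻¹) atTop (nhds 0) :=
      (tendsto_rpow_atTop hβ0).inv_tendsto_atTop
    have hs : Tendsto (fun m : ℝ => -s₀ * (m ^ β)⁻¹) atTop (nhdsWithin 0 (Set.Ioi 0)) := by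
      rw [tendsto_nhdsWithin_iff]
      refine ⟨by simpa using hx.const_mul (-s₀), ?_⟩
      filter_upwards [eventually_gt_atTop 0] with m hm
      have h1 : 0 < m ^ β := Real.rpow_pos_of_pos hm β
      have h2 : 0 < -s₀ := by linarith
      exact Set.mem_Ioi.mpr (by positivity)
    have hα : 0 < (1 - β) / β := div_pos (by linarith) hβ0
    have hL := (hωcond _ hα).comp hs
    have hr : Tendsto (fun m : ℝ => (1 - 2 * (m ^ β)⁻¹) / (1 - (m ^ β)⁻¹)) atTop (nhds 1) := by
      have := ((hx.const_mul 2).const_sub 1).div (hx.const_sub 1) (by norm_num)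
      simp only [mul_zero, sub_zero, div_one] at this
      exact this
    have hq : Tendsto (fun m : ℝ => 1 / (1 - (m ^ β)⁻¹)) atTop (nhds 1) := by
      have := (tendsto_const_nhds (x := (1:ℝ))).div (hx.const_sub 1) (by norm_num)
      simp only [mul_zero, sub_zero, div_one] at this
      exact this
    have hF := (hr.mul (hL.const_mul ((-s₀) ^ ((1 - β) / β))⁻¹)).sub hq
    simp only [mul_zero, zero_sub] at hF
    refine hF.congr' ?_
    filter_upwards [eventually_gt_atTop 1] with m hm
    have hm0 : 0 < m := by linarith
    have hy : 1 < m ^ β := Real.one_lt_rpow hm hβ0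
    have hz : 0 < m ^ (1 - β) := Real.rpow_pos_of_pos hm0 _
    have hyz : m = m ^ β * m ^ (1 - β) := by
      rw [← Real.rpow_add hm0]; simp
    have h2 : 0 < -s₀ := by linarith
    have hA : 0 < (-s₀) ^ ((1 - β) / β) := Real.rpow_pos_of_pos h2 _
    have hpow : (-s₀ * (m ^ β)⁻¹) ^ ((1 - β) / β)
        = (-s₀) ^ ((1 - β) / β) * (m ^ (1 - β))⁻¹ := by
      rw [Real.mul_rpow h2.le (by positivity), Real.inv_rpow (by positivity),
        ← Real.rpow_mul hm0.le, mul_div_cancel₀ _ hβ0.ne']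
    have harg : -(-s₀ * (m ^ β)⁻¹) = s₀ / m ^ β := by ring
    simp only [Function.comp, hpow, harg]
    generalize Real.log (ω (Real.exp (s₀ / m ^ β))) = L
    generalize (-s₀) ^ ((1 - β) / β) = A at *
    have hratio : (2 * s₀ / m ^ β - s₀) / (s₀ / m ^ β - s₀)
        = (m ^ β - 2) / (m ^ β - 1) := by
      have h3 : m ^ β - 1 ≠ 0 := by linarith
      have h4 : s₀ / m ^ β - s₀ = -s₀ * (m ^ β - 1) / m ^ β := by
        field_simp; ring
      have h5 : 2 * s₀ / m ^ β - s₀ = -s₀ * (m ^ β - 2) / m ^ β := by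
        field_simp; ring
      rw [h4, h5]
      have := hs₀.ne
      field_simp
    rw [hratio]
    generalize m ^ β = y at *
    generalize m ^ (1 - β) = z at *
    subst hyz
    have h3 : y - 1 ≠ 0 := by linarith
    have hy0 : y ≠ 0 := by linarith
    have h6 : 1 - y⁻¹ = (y - 1) / y := by field_simp
    have h7 : 1 - 2 * y⁻¹ = (y - 2) / y := by field_simp
    rw [h6, h7]
    field_simp
    ring
  refine ⟨key, fun c hc => ?_⟩
  have hev := key.eventually (gt_mem_nhds (show (-1:ℝ) < -c by linarith [hc.2]))
  obtain ⟨M, hM⟩ := eventually_atTop.mp hev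
  refine ⟨max M 1, by positivity, fun m hm => ?_⟩
  have h1 := hM m ((le_max_left _ _).trans hm.le)
  have hm0 : 0 < m := by linarith [le_max_right M 1]
  have hz : 0 < m ^ (1 - β) := Real.rpow_pos_of_pos hm0 _
  rw [one_div, inv_mul_lt_iff₀ hz] at h1
  linarith
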